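/- For every integer k > 2 there exist constants R = R(k) and s0 = s0(k) such that for every integer s > s0: any k-uniform [R,s]-almost intersecting hypergraph has at most (s+1)·(2k-2 choose k-1) edges, and if a k-uniform [R,s]-almost intersecting hypergraph F has exactly (s+1)·(2k-2 choose k-1) edges, then F is of the form M_f; that is, there exist disjoint finite sets A and B with |A| = 2k-2 and |B| ≥ s+1, and a function f from the (k-1)-element subsets of A to the (s+1)-element subsets of B satisfying f(S) = f(A \ S) for every (k-1)-element subset S of A, such that F = { S ∪ {x} : S ⊆ A, |S| = k-1, x ∈ f(S) }. -/

import Mathlib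

universe u

/-- The probability that a uniformly random ordering places all elements of a set of size `a` before
all elements of a disjoint set of size `b`. -/
def pairWeight (a b : ℕ) : ℚ := ((a + b).choose a : ℚ)⁻¹

theorem pairWeight_comm (a b : ℕ) : pairWeight a b = pairWeight b a := by
  rw [pairWeight, pairWeight, Nat.choose_symm_add, add_comm]

theorem pairWeight_succ_mul (a b : ℕ) :
    ((b : ℚ) + 1) * pairWeight a b = (a + b + 1) * pairWeight a (b + 1) := by
  have h := Nat.choose_mul_succ_eq (a + b) a
  have h1 : ((a + b).choose a : ℚ) ≠ 0 := by
    exact_mod_cast (Nat.choose_pos (Nat.le_add_right a b)).ne'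
  have h2 : ((a + (b + 1)).choose a : ℚ) ≠ 0 := by
    exact_mod_cast (Nat.choose_pos (Nat.le_add_right a (b + 1))).ne'
  have h3 : a + b + 1 - a = b + 1 := by omega
  rw [h3] at h
  have h' : ((a + b).choose a : ℚ) * (a + b + 1) = ((a + (b + 1)).choose a : ℚ) * (b + 1) := by
    exact_mod_cast h
  unfold pairWeight
  field_simp
  linarith

/-- Disjoint pairs `(S i, T i)`, such that `S i` meets `T j` whenever `i ≠ j`. -/
structure CrossPairs {ι : Type*} {α : Type u} (I : Finset ι) (S T : ι → Finset α) : Prop where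
  disjoint : ∀ i ∈ I, Disjoint (S i) (T i)
  meets : ∀ i ∈ I, ∀ j ∈ I, i ≠ j → ¬ Disjoint (S i) (T j)

namespace CrossPairs

variable {ι : Type*} {α : Type u} {I : Finset ι} {S T : ι → Finset α}

theorem swap (h : CrossPairs I S T) : CrossPairs I T S where
  disjoint i hi := (h.disjoint i hi).symm
  meets i hi j hj hij hd := h.meets j hj i hi hij.symm hd.symm

theorem left_injOn (h : CrossPairs I S T) : Set.InjOn S I := by
  intro i hi j hj hij
  by_contra hne
  exact h.meets i hi j hj hne (hij ▸ h.disjoint j hj)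

theorem eq_of_disjoint (h : CrossPairs I S T) {i j : ι} (hi : i ∈ I) (hj : j ∈ I)
    (hd : Disjoint (S i) (T j)) : i = j := by
  by_contra hne
  exact h.meets i hi j hj hne hd

theorem eq_singleton (h : CrossPairs I S T) {i : ι} (hi : i ∈ I) (hT : T i = ∅) : I = {i} := by
  refine Finset.eq_singleton_iff_unique_mem.2 ⟨hi, fun j hj => ?_⟩
  exact h.eq_of_disjoint hj hi (by simp [hT])

variable [DecidableEq α]

theorem sdiff (h : CrossPairs I S T) (P : Finset α) :
    CrossPairs (I.filter fun i => Disjoint (S i) P) S (fun i => T i \ P) where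
  disjoint i hi := (h.disjoint i (Finset.mem_filter.1 hi).1).mono_right Finset.sdiff_subset
  meets i hi j hj hij hd := by
    obtain ⟨hi, hP⟩ := Finset.mem_filter.1 hi
    obtain ⟨hj, -⟩ := Finset.mem_filter.1 hj
    refine h.meets i hi j hj hij ?_
    rw [Finset.disjoint_left] at hd hP ⊢
    intro x hx hxT
    exact hd hx (Finset.mem_sdiff.2 ⟨hxT, hP hx⟩)

theorem sum_pairWeight_sdiff {V A B : Finset α} (hA : A ⊆ V) (hB : B ⊆ V) (hd : Disjoint A B)
    (hne : B.Nonempty) :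
    ∑ v ∈ V with Disjoint A {v}, pairWeight A.card (B \ {v}).card
      = V.card * pairWeight A.card B.card := by
  have hV : (V.filter fun v => Disjoint A {v}) = B ∪ (V \ (A ∪ B)) := by
    ext v
    have hvA : v ∈ B → v ∉ A := fun hv => Finset.disjoint_right.1 hd hv
    have hvV : v ∈ B → v ∈ V := fun hv => hB hv
    simp only [Finset.mem_filter, Finset.disjoint_singleton_right, Finset.mem_union,
      Finset.mem_sdiff]
    tauto
  have hd2 : Disjoint B (V \ (A ∪ B)) :=
    Finset.disjoint_sdiff.mono_left Finset.subset_union_right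
  obtain ⟨b, hb⟩ : ∃ b, B.card = b + 1 := ⟨B.card - 1, by have := hne.card_pos; omega⟩
  rw [hV, Finset.sum_union hd2,
    Finset.sum_congr rfl (g := fun _ => pairWeight A.card b),
    Finset.sum_congr rfl (s₁ := V \ (A ∪ B)) (g := fun _ => pairWeight A.card B.card)]
  · have hc : (V \ (A ∪ B)).card + (A.card + B.card) = V.card := by
      rw [← Finset.card_union_of_disjoint hd]
      exact Finset.card_sdiff_add_card_eq_card (Finset.union_subset hA hB)
    have hc' : (V.card : ℚ) = (V \ (A ∪ B)).card + (A.card + (b + 1)) := by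
      rw [← hc, hb]; push_cast; ring
    have := pairWeight_succ_mul A.card b
    rw [Finset.sum_const, Finset.sum_const, nsmul_eq_mul, nsmul_eq_mul, hc', hb]
    push_cast
    linarith
  · intro v hv
    have : v ∉ B := fun hvB => (Finset.disjoint_left.1 hd2 hvB) hv
    rw [Finset.sdiff_singleton_eq_erase, Finset.erase_eq_of_notMem this]
  · intro v hv
    rw [Finset.card_sdiff_of_subset (by simpa using hv), hb]
    simp

theorem sum_sum_pairWeight (h : CrossPairs I S T) {V : Finset α} (hS : ∀ i ∈ I, S i ⊆ V)
    (hT : ∀ i ∈ I, T i ⊆ V) (hne : ∀ i ∈ I, (T i).Nonempty) :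
    ∑ v ∈ V, ∑ i ∈ I with Disjoint (S i) {v}, pairWeight (S i).card (T i \ {v}).card
      = V.card * ∑ i ∈ I, pairWeight (S i).card (T i).card := by
  simp_rw [Finset.sum_filter]
  rw [Finset.sum_comm, Finset.mul_sum]
  refine Finset.sum_congr rfl fun i hi => ?_
  rw [← Finset.sum_filter]
  exact sum_pairWeight_sdiff (hS i hi) (hT i hi) (h.disjoint i hi) (hne i hi)

theorem sum_pairWeight_le_one_aux (V : Finset α) : ∀ (I : Finset ι) (T : ι → Finset α),
    CrossPairs I S T → (∀ i ∈ I, S i ⊆ V) → (∀ i ∈ I, T i ⊆ V) →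
    ∑ i ∈ I, pairWeight (S i).card (T i).card ≤ 1 := by
  induction V using Finset.strongInduction with
  | H V ih =>
    intro I T h hS hT
    by_cases hne : ∀ i ∈ I, (T i).Nonempty
    · rcases I.eq_empty_or_nonempty with rfl | ⟨i, hi⟩
      · simp
      have hV : 0 < (V.card : ℚ) := by
        exact_mod_cast ((hne i hi).mono (hT i hi)).card_pos
      have key : (V.card : ℚ) * ∑ i ∈ I, pairWeight (S i).card (T i).card ≤ V.card * 1 := by
        rw [← h.sum_sum_pairWeight hS hT hne, mul_one, Finset.cast_card]
        refine Finset.sum_le_sum fun v hv => ?_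
        refine ih (V \ {v}) (Finset.sdiff_ssubset (by simpa using hv) (by simp)) _ _
          (h.sdiff {v}) ?_ ?_
        · intro i hi
          rw [Finset.mem_filter] at hi
          exact Finset.subset_sdiff.2 ⟨hS i hi.1, hi.2⟩
        · intro i hi
          exact Finset.sdiff_subset_sdiff (hT i (Finset.mem_filter.1 hi).1) subset_rfl
      exact le_of_mul_le_mul_left key hV
    · push Not at hne
      obtain ⟨i, hi, hTi⟩ := hne
      rw [h.eq_singleton hi hTi]
      simp [hTi, pairWeight]

/-- The set pairs inequality of Bollobás. -/
theorem sum_pairWeight_le_one (h : CrossPairs I S T) :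
    ∑ i ∈ I, pairWeight (S i).card (T i).card ≤ 1 :=
  sum_pairWeight_le_one_aux (I.biUnion fun i => S i ∪ T i) I T h
    (fun _ hi => Finset.subset_union_left.trans
      (Finset.subset_biUnion_of_mem (fun i => S i ∪ T i) hi))
    (fun _ hi => Finset.subset_union_right.trans
      (Finset.subset_biUnion_of_mem (fun i => S i ∪ T i) hi))

theorem sum_pairWeight_sdiff_singleton (h : CrossPairs I S T)
    (h1 : ∑ i ∈ I, pairWeight (S i).card (T i).card = 1) (hne : ∀ i ∈ I, (T i).Nonempty) (v : α) :
    ∑ i ∈ I with Disjoint (S i) {v}, pairWeight (S i).card (T i \ {v}).card = 1 := by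
  set V := insert v (I.biUnion fun i => S i ∪ T i) with hV
  have hsub : ∀ i ∈ I, S i ∪ T i ⊆ V := fun i hi =>
    (Finset.subset_biUnion_of_mem (fun i => S i ∪ T i) hi).trans (Finset.subset_insert _ _)
  have key := h.sum_sum_pairWeight (V := V)
    (fun i hi => Finset.subset_union_left.trans (hsub i hi))
    (fun i hi => Finset.subset_union_right.trans (hsub i hi)) hne
  rw [h1, mul_one, Finset.cast_card] at key
  exact (Finset.sum_eq_sum_iff_of_le fun w _ => (h.sdiff {w}).sum_pairWeight_le_one).1 key v
    (Finset.mem_insert_self _ _)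

theorem sum_pairWeight_sdiff_eq_one (h : CrossPairs I S T)
    (h1 : ∑ i ∈ I, pairWeight (S i).card (T i).card = 1) {i : ι} (hi : i ∈ I) (P : Finset α)
    (hSP : Disjoint (S i) P) (hTP : (T i \ P).Nonempty) :
    ∑ i ∈ I with Disjoint (S i) P, pairWeight (S i).card (T i \ P).card = 1 := by
  induction P using Finset.induction with
  | empty => simpa using h1
  | insert v P hv ih =>
    have hP := ih (hSP.mono_right (Finset.subset_insert _ _))
      (hTP.mono (Finset.sdiff_subset_sdiff subset_rfl (Finset.subset_insert _ _)))
    have hiP : i ∈ I.filter fun i => Disjoint (S i) P :=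
      Finset.mem_filter.2 ⟨hi, hSP.mono_right (Finset.subset_insert _ _)⟩
    have hne : ∀ j ∈ I.filter fun i => Disjoint (S i) P, (T j \ P).Nonempty := by
      intro j hj
      by_contra hj0
      rw [Finset.not_nonempty_iff_eq_empty] at hj0
      have hij := (h.sdiff P).eq_of_disjoint hiP hj (by simp [hj0])
      subst hij
      rw [Finset.sdiff_insert, hj0] at hTP
      simp at hTP
    have key := (h.sdiff P).sum_pairWeight_sdiff_singleton hP hne v
    rw [Finset.filter_filter] at key
    convert key using 2
    · ext j
      simp [Finset.disjoint_insert_right, and_comm]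
    · rw [sdiff_sdiff_left, Finset.sup_eq_union, Finset.union_comm, Finset.insert_eq]

theorem exists_exchange_left (h : CrossPairs I S T) {n : ℕ}
    (h1 : ∑ i ∈ I, pairWeight (S i).card (T i).card = 1) (hS : ∀ i ∈ I, (S i).card = n)
    {i : ι} (hi : i ∈ I) {y z : α} (hy : y ∈ S i) (hz : z ∈ T i) :
    ∃ j ∈ I, S j = insert z ((S i).erase y) := by
  have hzS : z ∉ S i := fun hzS => Finset.disjoint_left.1 (h.disjoint i hi) hzS hz
  set Q := insert z (S i) with hQ
  have hQc : Q.card = n + 1 := by rw [Finset.card_insert_of_notMem hzS, hS i hi]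
  set P := (I.biUnion fun i => S i ∪ T i) \ Q with hP
  have hSi : Disjoint (S i) P :=
    Finset.disjoint_sdiff.mono_left (Finset.subset_insert _ _)
  have hzP : z ∈ T i \ P := Finset.mem_sdiff.2 ⟨hz, by simp [hP, hQ]⟩
  have hsum := h.sum_pairWeight_sdiff_eq_one h1 hi P hSi ⟨z, hzP⟩
  have hsub : ∀ j ∈ I, ∀ x, x ∈ S j ∨ x ∈ T j → x ∉ P → x ∈ Q := by
    intro j hj x hx hxP
    by_contra hxQ
    exact hxP (Finset.mem_sdiff.2 ⟨Finset.mem_biUnion.2 ⟨j, hj, Finset.mem_union.2 hx⟩, hxQ⟩)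
  set J := I.filter fun i => Disjoint (S i) P with hJ
  have hiJ : i ∈ J := Finset.mem_filter.2 ⟨hi, hSi⟩
  have hJQ : ∀ j ∈ J, S j ⊆ Q := by
    intro j hj x hx
    obtain ⟨hjI, hjP⟩ := Finset.mem_filter.1 hj
    exact hsub j hjI x (Or.inl hx) (Finset.disjoint_left.1 hjP hx)
  have hw : ∀ j ∈ J, pairWeight (S j).card (T j \ P).card = ((n : ℚ) + 1)⁻¹ := by
    intro j hj
    obtain ⟨hjI, hjP⟩ := Finset.mem_filter.1 hj
    have hTQ : T j \ P ⊆ Q \ S j := by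
      intro x hx
      rw [Finset.mem_sdiff] at hx ⊢
      exact ⟨hsub j hjI x (Or.inr hx.1) hx.2,
        fun hxS => Finset.disjoint_left.1 (h.disjoint j hjI) hxS hx.1⟩
    have hle := Finset.card_le_card hTQ
    rw [Finset.card_sdiff_of_subset (hJQ j hj), hQc, hS j hjI] at hle
    have hpos : 0 < (T j \ P).card := by
      rw [Finset.card_pos]
      by_contra hj0
      rw [Finset.not_nonempty_iff_eq_empty] at hj0
      have hij := (h.sdiff P).eq_of_disjoint hiJ hj (by simp [hj0])
      subst hij
      simp [hj0] at hzP
    have : (T j \ P).card = 1 := by omega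
    rw [this, hS j hjI, pairWeight]
    simp
  rw [Finset.sum_congr rfl hw, Finset.sum_const, nsmul_eq_mul] at hsum
  have hJc : J.card = n + 1 := by
    have hn : (n : ℚ) + 1 ≠ 0 := by positivity
    field_simp at hsum
    exact_mod_cast hsum
  have himg : J.image S = Q.powersetCard n := by
    refine Finset.eq_of_subset_of_card_le ?_ ?_
    · intro X hX
      obtain ⟨j, hj, rfl⟩ := Finset.mem_image.1 hX
      exact Finset.mem_powersetCard.2 ⟨hJQ j hj, hS j (Finset.mem_filter.1 hj).1⟩
    · rw [Finset.card_powersetCard, hQc, Finset.card_image_of_injOn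
        (h.left_injOn.mono (Finset.coe_subset.2 (Finset.filter_subset _ _))), hJc]
      simp
  have hmem : insert z ((S i).erase y) ∈ J.image S := by
    rw [himg, Finset.mem_powersetCard]
    refine ⟨Finset.insert_subset_insert _ (Finset.erase_subset _ _), ?_⟩
    have := Finset.card_erase_add_one hy
    rw [Finset.card_insert_of_notMem (fun hm => hzS (Finset.mem_of_mem_erase hm)), this, hS i hi]
  obtain ⟨j, hj, hjS⟩ := Finset.mem_image.1 hmem
  exact ⟨j, (Finset.mem_filter.1 hj).1, hjS⟩

theorem exists_exchange (h : CrossPairs I S T) {n : ℕ}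
    (h1 : ∑ i ∈ I, pairWeight (S i).card (T i).card = 1) (hS : ∀ i ∈ I, (S i).card = n)
    (hT : ∀ i ∈ I, (T i).card = n)
    {i : ι} (hi : i ∈ I) {y z : α} (hy : y ∈ S i) (hz : z ∈ T i) :
    ∃ j ∈ I, S j = insert z ((S i).erase y) ∧ T j = insert y ((T i).erase z) := by
  obtain ⟨j, hj, hjS⟩ := h.exists_exchange_left h1 hS hi hy hz
  obtain ⟨l, hl, hlT⟩ := h.swap.exists_exchange_left
    (by simpa only [pairWeight_comm] using h1) hT hi hz hy
  have hd := Finset.disjoint_left.1 (h.disjoint i hi)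
  have hjl : j = l := by
    refine h.eq_of_disjoint hj hl ?_
    rw [hjS, hlT, Finset.disjoint_left]
    intro x hx hx'
    simp only [Finset.mem_insert, Finset.mem_erase] at hx hx'
    rcases hx with rfl | hx
    · rcases hx' with rfl | hx'
      · exact hd hy hz
      · exact hx'.1 rfl
    · rcases hx' with rfl | hx'
      · exact hx.1 rfl
      · exact hd hx.2 hx'.2
  subst hjl
  exact ⟨j, hj, hjS, hlT⟩

end CrossPairs

theorem choose_add_le_centralBinom {a b n : ℕ} (ha : a ≤ n) (hb : b ≤ n) :
    (a + b).choose a ≤ (2 * n).choose n := by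
  calc (a + b).choose a ≤ (a + n).choose a := Nat.choose_mono _ (by omega)
    _ = (a + n).choose n := Nat.choose_symm_add
    _ ≤ (2 * n).choose n := Nat.choose_mono _ (by omega)

theorem eq_of_choose_add_eq {a b n : ℕ} (hn : 0 < n) (ha : a ≤ n) (hb : b ≤ n)
    (h : (a + b).choose a = (2 * n).choose n) : a = n ∧ b = n := by
  have aux : ∀ {a b : ℕ}, a ≤ n → b ≤ n → (a + b).choose a = (2 * n).choose n → a = n := by
    intro a b ha hb h
    by_contra hne
    have h1 : (a + b).choose a ≤ (a + n).choose a := Nat.choose_mono _ (by omega)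
    rw [Nat.choose_symm_add (a := a) (b := n)] at h1
    have h2 : (a + n).choose n ≤ (2 * n - 1).choose n := Nat.choose_mono _ (by omega)
    have h3 : (2 * n).choose n = (2 * n - 1).choose (n - 1) + (2 * n - 1).choose n := by
      obtain ⟨m, rfl⟩ : ∃ m, n = m + 1 := ⟨n - 1, by omega⟩
      exact Nat.choose_succ_succ' (2 * m + 1) m
    have h4 : 0 < (2 * n - 1).choose (n - 1) := Nat.choose_pos (by omega)
    omega
  refine ⟨aux ha hb h, aux hb ha ?_⟩
  rw [← h, add_comm, Nat.choose_symm_add]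

namespace CrossPairs

variable {ι : Type*} {α : Type u} {I : Finset ι} {S T : ι → Finset α}

theorem inv_le_pairWeight {n : ℕ} (hS : ∀ i ∈ I, (S i).card ≤ n) (hT : ∀ i ∈ I, (T i).card ≤ n) :
    ∀ i ∈ I, ((2 * n).choose n : ℚ)⁻¹ ≤ pairWeight (S i).card (T i).card := by
  intro i hi
  have hpos : 0 < (((S i).card + (T i).card).choose (S i).card : ℚ) := by
    exact_mod_cast Nat.choose_pos (Nat.le_add_right _ _)
  refine inv_anti₀ hpos ?_
  exact_mod_cast choose_add_le_centralBinom (hS i hi) (hT i hi)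

variable [DecidableEq α]

theorem card_le (h : CrossPairs I S T) {n : ℕ} (hS : ∀ i ∈ I, (S i).card ≤ n)
    (hT : ∀ i ∈ I, (T i).card ≤ n) : I.card ≤ (2 * n).choose n := by
  have h1 := (Finset.sum_le_sum (inv_le_pairWeight hS hT)).trans h.sum_pairWeight_le_one
  rw [Finset.sum_const, nsmul_eq_mul, ← div_eq_mul_inv, div_le_one] at h1
  · exact_mod_cast h1
  · exact_mod_cast Nat.choose_pos (by omega : n ≤ 2 * n)

theorem forall_mem_powersetCard (h : CrossPairs I S T) {n : ℕ}
    (h1 : ∑ i ∈ I, pairWeight (S i).card (T i).card = 1) (hS : ∀ i ∈ I, (S i).card = n)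
    (hT : ∀ i ∈ I, (T i).card = n) {X P : Finset α} (hP : P ∈ X.powersetCard n) (d : ℕ) :
    ∀ i ∈ I, S i ∪ T i = X → (P \ T i).card = d → ∃ j ∈ I, T j = P := by
  rw [Finset.mem_powersetCard] at hP
  induction d with
  | zero =>
    intro i hi _ hd
    rw [Finset.card_eq_zero, Finset.sdiff_eq_empty_iff_subset] at hd
    exact ⟨i, hi, (Finset.eq_of_subset_of_card_le hd (by rw [hT i hi, hP.2])).symm⟩
  | succ d ih =>
    intro i hi hX hd
    have hc : (T i \ P).card = d + 1 := by
      rw [← hd]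
      exact Finset.card_sdiff_comm (by rw [hT i hi, hP.2])
    obtain ⟨y, hy⟩ := Finset.card_pos.1 (by omega : 0 < (P \ T i).card)
    obtain ⟨z, hz⟩ := Finset.card_pos.1 (by omega : 0 < (T i \ P).card)
    have hyd := hy
    rw [Finset.mem_sdiff] at hy hz
    have hyS : y ∈ S i := by
      have := hP.1 hy.1
      rw [← hX, Finset.mem_union] at this
      tauto
    obtain ⟨j, hj, hjS, hjT⟩ := h.exists_exchange h1 hS hT hi hyS hz.1
    refine ih j hj ?_ ?_
    · rw [← hX, hjS, hjT]
      ext x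
      simp only [Finset.mem_union, Finset.mem_insert, Finset.mem_erase]
      have : y ∈ S i := hyS
      have : z ∈ T i := hz.1
      by_cases hxy : x = y <;> by_cases hxz : x = z <;> simp_all
    · have : P \ T j = (P \ T i).erase y := by
        rw [hjT]
        ext x
        simp only [Finset.mem_sdiff, Finset.mem_insert, Finset.mem_erase]
        by_cases hxz : x = z
        · subst hxz; tauto
        · tauto
      rw [this, Finset.card_erase_of_mem hyd, hd]
      rfl

theorem exists_image_eq_powersetCard (h : CrossPairs I S T) {n : ℕ} (hn : 0 < n)
    (hS : ∀ i ∈ I, (S i).card ≤ n) (hT : ∀ i ∈ I, (T i).card ≤ n)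
    (hI : I.card = (2 * n).choose n) :
    ∃ X : Finset α, X.card = 2 * n ∧ I.image T = X.powersetCard n := by
  have hpos : 0 < (2 * n).choose n := Nat.choose_pos (by omega)
  have hconst : ∑ _i ∈ I, ((2 * n).choose n : ℚ)⁻¹ = 1 := by
    rw [Finset.sum_const, nsmul_eq_mul, hI]
    exact mul_inv_cancel₀ (by exact_mod_cast hpos.ne')
  have hle := inv_le_pairWeight hS hT
  have h1 : ∑ i ∈ I, pairWeight (S i).card (T i).card = 1 :=
    le_antisymm h.sum_pairWeight_le_one (hconst ▸ Finset.sum_le_sum hle)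
  have hw := (Finset.sum_eq_sum_iff_of_le hle).1 (hconst.trans h1.symm)
  have hcard : ∀ i ∈ I, (S i).card = n ∧ (T i).card = n := by
    intro i hi
    refine eq_of_choose_add_eq hn (hS i hi) (hT i hi) ?_
    have := hw i hi
    rw [pairWeight, inv_inj] at this
    exact_mod_cast this.symm
  obtain ⟨i, hi⟩ := Finset.card_pos.1 (hI ▸ hpos)
  have hX : (S i ∪ T i).card = 2 * n := by
    rw [Finset.card_union_of_disjoint (h.disjoint i hi), (hcard i hi).1, (hcard i hi).2]
    omega
  refine ⟨S i ∪ T i, hX, ?_⟩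
  symm
  refine Finset.eq_of_subset_of_card_le ?_ ?_
  · intro P hP
    obtain ⟨j, hj, rfl⟩ := h.forall_mem_powersetCard h1 (fun i hi => (hcard i hi).1)
      (fun i hi => (hcard i hi).2) hP _ i hi rfl rfl
    exact Finset.mem_image_of_mem _ hj
  · rw [Finset.card_powersetCard, hX, ← hI]
    exact Finset.card_image_le

end CrossPairs

/-- A family of sets whose pairwise intersections all equal `K`. -/
structure IsSunflower {α : Type u} [DecidableEq α] (G : Finset (Finset α)) (K : Finset α) :
    Prop where
  kernel_subset : ∀ A ∈ G, K ⊆ A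
  inter_eq : ∀ A ∈ G, ∀ B ∈ G, A ≠ B → A ∩ B = K

/-- The sunflower lemma. -/
theorem exists_sunflower (t k : ℕ) : ∃ M : ℕ, ∀ {α : Type u} [DecidableEq α]
    (F : Finset (Finset α)), (∀ A ∈ F, A.card = k) → M < F.card →
    ∃ G ⊆ F, G.card = t ∧ ∃ K, IsSunflower G K := by
  induction k with
  | zero =>
    refine ⟨1, fun F hF hM => ?_⟩
    have : F ⊆ {∅} := fun A hA => by simpa using hF A hA
    have := Finset.card_le_card this
    simp at this
    omega
  | succ k ih =>
    obtain ⟨M, hM⟩ := ih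
    refine ⟨t * (k + 1) * M, fun {α} _ F hF hcard => ?_⟩
    classical
    obtain ⟨D, hD, hmax⟩ := Finset.exists_max_image
      (F.powerset.filter fun D => ∀ A ∈ D, ∀ B ∈ D, A ≠ B → Disjoint A B) Finset.card
      ⟨∅, by simp⟩
    rw [Finset.mem_filter, Finset.mem_powerset] at hD
    by_cases ht : t ≤ D.card
    · obtain ⟨G, hGD, hG⟩ := Finset.exists_subset_card_eq ht
      exact ⟨G, hGD.trans hD.1, hG, ∅, ⟨by simp, fun A hA B hB hAB =>
        Finset.disjoint_iff_inter_eq_empty.1 (hD.2 A (hGD hA) B (hGD hB) hAB)⟩⟩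
    set U := D.biUnion id with hU
    have hUc : U.card ≤ t * (k + 1) := by
      refine (Finset.card_biUnion_le_card_mul D id (k + 1)
        fun A hA => (hF A (hD.1 hA)).le).trans (Nat.mul_le_mul_right _ (by omega))
    have hmeet : ∀ A ∈ F, ¬ Disjoint A U := by
      intro A hA hdis
      rw [hU, Finset.disjoint_biUnion_right] at hdis
      have hAD : A ∉ D := by
        intro hAD
        have h0 := hdis A hAD
        have h1 := hF A hA
        simp only [id, disjoint_self, Finset.bot_eq_empty] at h0
        simp [h0] at h1
      have := hmax (insert A D) (by
        rw [Finset.mem_filter, Finset.mem_powerset]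
        refine ⟨Finset.insert_subset hA hD.1, ?_⟩
        intro B hB C hC hBC
        rw [Finset.mem_insert] at hB hC
        rcases hB with rfl | hB
        · rcases hC with rfl | hC
          · exact absurd rfl hBC
          · exact hdis C hC
        · rcases hC with rfl | hC
          · exact (hdis B hB).symm
          · exact hD.2 B hB C hC hBC)
      rw [Finset.card_insert_of_notMem hAD] at this
      omega
    obtain ⟨x, -, hx⟩ : ∃ x ∈ U, M < (F.filter fun A => x ∈ A).card := by
      by_contra hcon
      push Not at hcon
      have hsub : F ⊆ U.biUnion fun x => F.filter fun A => x ∈ A := by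
        intro A hA
        obtain ⟨x, hxA, hxU⟩ := Finset.not_disjoint_iff.1 (hmeet A hA)
        exact Finset.mem_biUnion.2 ⟨x, hxU, Finset.mem_filter.2 ⟨hA, hxA⟩⟩
      have h1 := Finset.card_le_card hsub
      have h2 := Finset.card_biUnion_le_card_mul U _ M hcon
      have h3 := Nat.mul_le_mul_right M hUc
      omega
    have hinj : Set.InjOn (fun A : Finset α => A.erase x) (F.filter fun A => x ∈ A) := by
      intro A hA B hB hAB
      simp only [Finset.coe_filter, Set.mem_ofPred_eq] at hA hB
      rw [← Finset.insert_erase hA.2, ← Finset.insert_erase hB.2]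
      exact congrArg _ hAB
    obtain ⟨G, hG, hGc, K, hK⟩ := hM ((F.filter fun A => x ∈ A).image fun A => A.erase x)
      (by
        intro B hB
        obtain ⟨A, hA, rfl⟩ := Finset.mem_image.1 hB
        rw [Finset.mem_filter] at hA
        rw [Finset.card_erase_of_mem hA.2, hF A hA.1]
        rfl)
      (by rwa [Finset.card_image_of_injOn hinj])
    have hGx : ∀ B ∈ G, x ∉ B ∧ insert x B ∈ F := by
      intro B hB
      obtain ⟨A, hA, rfl⟩ := Finset.mem_image.1 (hG hB)
      rw [Finset.mem_filter] at hA
      exact ⟨Finset.notMem_erase _ _, by rw [Finset.insert_erase hA.2]; exact hA.1⟩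
    refine ⟨G.image (insert x), ?_, ?_, insert x K, ?_, ?_⟩
    · intro B hB
      obtain ⟨A, hA, rfl⟩ := Finset.mem_image.1 hB
      exact (hGx A hA).2
    · rw [Finset.card_image_of_injOn, hGc]
      intro A hA B hB hAB
      rw [← Finset.erase_insert (hGx A hA).1, ← Finset.erase_insert (hGx B hB).1]
      exact congrArg (fun C => C.erase x) hAB
    · intro B hB
      obtain ⟨A, hA, rfl⟩ := Finset.mem_image.1 hB
      exact Finset.insert_subset_insert _ (hK.kernel_subset A hA)
    · intro A hA B hB hAB
      obtain ⟨A', hA', rfl⟩ := Finset.mem_image.1 hA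
      obtain ⟨B', hB', rfl⟩ := Finset.mem_image.1 hB
      rw [← Finset.insert_inter_distrib, hK.inter_eq A' hA' B' hB' fun h => hAB (h ▸ rfl)]

namespace IsSunflower

variable {α : Type u} [DecidableEq α] {G : Finset (Finset α)} {K : Finset α}

/-- A set disjoint from the kernel meets few petals. -/
theorem card_not_disjoint_le (h : IsSunflower G K) {C : Finset α} (hC : Disjoint C K) :
    (G.filter fun A => ¬ Disjoint A C).card ≤ C.card := by
  rcases C.eq_empty_or_nonempty with rfl | ⟨c, -⟩
  · simp
  have : Nonempty α := ⟨c⟩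
  have hex : ∀ A ∈ G.filter fun A => ¬ Disjoint A C, ∃ x, x ∈ A ∧ x ∈ C := fun A hA =>
    Finset.not_disjoint_iff.1 (Finset.mem_filter.1 hA).2
  choose! f hf using hex
  refine Finset.card_le_card_of_injOn f (fun A hA => (hf A hA).2) ?_
  intro A hA B hB hAB
  by_contra hne
  have hK := h.inter_eq A (Finset.mem_filter.1 hA).1 B (Finset.mem_filter.1 hB).1 hne
  have hx : f A ∈ K := hK ▸ Finset.mem_inter.2 ⟨(hf A hA).1, hAB ▸ (hf B hB).1⟩
  exact Finset.disjoint_left.1 hC (hf A hA).2 hx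

/-- A small set that meets all petals meets the kernel. -/
theorem not_disjoint_kernel (h : IsSunflower G K) {C : Finset α} (hC : C.card < G.card)
    (hG : ∀ A ∈ G, ¬ Disjoint A C) : ¬ Disjoint K C := by
  intro hd
  have := h.card_not_disjoint_le hd.symm
  rw [Finset.filter_true_of_mem hG] at this
  omega

theorem card_kernel_lt (h : IsSunflower G K) {k : ℕ} (hG : ∀ A ∈ G, A.card = k)
    (h2 : 1 < G.card) : K.card < k := by
  obtain ⟨A, hA, B, hB, hAB⟩ := Finset.one_lt_card.1 h2
  have hKA := h.kernel_subset A hA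
  rw [← hG A hA]
  refine Finset.card_lt_card (hKA.ssubset_of_ne ?_)
  rintro rfl
  exact hAB (Finset.eq_of_subset_of_card_le (h.kernel_subset B hB) (by rw [hG _ hA, hG B hB]))

/-- If the petals are each disjoint from at most `s` members of `F`, then only slightly more than
`s` members of `F` are disjoint from the kernel. -/
theorem card_disjoint_kernel_mul_le (h : IsSunflower G K) {F : Finset (Finset α)} {k s : ℕ}
    (hF : ∀ A ∈ F, A.card = k) (hGF : G ⊆ F)
    (hs : ∀ A ∈ F, (F.filter fun B => Disjoint A B).card ≤ s) :
    (F.filter fun A => Disjoint A K).card * (G.card - k) ≤ G.card * s := by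
  set D := F.filter fun A => Disjoint A K with hD
  have hcount := Finset.sum_card_bipartiteAbove_eq_sum_card_bipartiteBelow
    (s := D) (t := G) (fun C A => Disjoint A C)
  have hlow : D.card * (G.card - k) ≤
      ∑ C ∈ D, (G.bipartiteAbove (fun C A => Disjoint A C) C).card := by
    rw [← smul_eq_mul]
    refine Finset.card_nsmul_le_sum _ _ _ fun C hC => ?_
    rw [hD, Finset.mem_filter] at hC
    have h1 := h.card_not_disjoint_le hC.2
    rw [hF C hC.1] at h1
    have h2 := Finset.card_filter_add_card_filter_not (s := G) fun A => Disjoint A C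
    rw [Finset.bipartiteAbove]
    omega
  have hup : ∑ A ∈ G, (D.bipartiteBelow (fun C A => Disjoint A C) A).card ≤ G.card * s := by
    rw [← smul_eq_mul]
    refine Finset.sum_le_card_nsmul _ _ _ fun A hA => ?_
    refine le_trans (Finset.card_le_card ?_) (hs A (hGF hA))
    exact Finset.filter_subset_filter _ (Finset.filter_subset _ _)
  omega

end IsSunflower

section Covers

variable {α : Type u} [DecidableEq α] {F : Finset (Finset α)}

/-- If every member of a `k`-uniform family is disjoint from some good set with at most `k`
elements, then boundedly many good sets suffice for the members containing `U`. -/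
theorem exists_disjoint_cover {k : ℕ} (hF : ∀ A ∈ F, A.card = k) {good : Finset α → Prop}
    (hgood : ∀ A ∈ F, ∃ T, good T ∧ T.card ≤ k ∧ Disjoint A T) (d : ℕ) :
    ∀ U : Finset α, U.card + d = k → ∃ 𝒯 : Finset (Finset α), 𝒯.card ≤ (k + 1) ^ d ∧
      (∀ T ∈ 𝒯, good T) ∧ ∀ A ∈ F, U ⊆ A → ∃ T ∈ 𝒯, Disjoint A T := by
  induction d with
  | zero =>
    intro U hU
    by_cases hUF : U ∈ F
    · obtain ⟨T, hT, -, hd⟩ := hgood U hUF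
      refine ⟨{T}, by simp, by simpa using hT, fun A hA hUA => ⟨T, by simp, ?_⟩⟩
      rwa [← Finset.eq_of_subset_of_card_le hUA (by rw [hF A hA]; omega)]
    · refine ⟨∅, by simp, by simp, fun A hA hUA => ?_⟩
      rw [Finset.eq_of_subset_of_card_le hUA (by rw [hF A hA]; omega)] at hUF
      exact absurd hA hUF
  | succ d ih =>
    intro U hU
    by_cases hUF : ∃ A ∈ F, U ⊆ A
    · obtain ⟨A₀, hA₀, hUA₀⟩ := hUF
      obtain ⟨T, hT, hTk, hd⟩ := hgood A₀ hA₀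
      have hex : ∀ x : α, ∃ 𝒯 : Finset (Finset α), 𝒯.card ≤ (k + 1) ^ d ∧ (∀ T ∈ 𝒯, good T) ∧
          (x ∈ T → ∀ A ∈ F, insert x U ⊆ A → ∃ T ∈ 𝒯, Disjoint A T) := by
        intro x
        by_cases hx : x ∈ T
        · have hxU : x ∉ U := fun hxU => Finset.disjoint_left.1 hd (hUA₀ hxU) hx
          obtain ⟨𝒯, h1, h2, h3⟩ := ih (insert x U) (by
            rw [Finset.card_insert_of_notMem hxU]; omega)
          exact ⟨𝒯, h1, h2, fun _ => h3⟩
        · exact ⟨∅, by simp, by simp, fun h => absurd h hx⟩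
      choose f hf1 hf2 hf3 using hex
      refine ⟨insert T (T.biUnion f), ?_, ?_, ?_⟩
      · have h1 := Finset.card_insert_le T (T.biUnion f)
        have h2 := Finset.card_biUnion_le_card_mul T f _ fun x _ => hf1 x
        have h3 := Nat.mul_le_mul_right ((k + 1) ^ d) hTk
        have h4 : 0 < (k + 1) ^ d := by positivity
        rw [pow_succ]
        linarith
      · intro T' hT'
        rw [Finset.mem_insert, Finset.mem_biUnion] at hT'
        rcases hT' with rfl | ⟨x, -, hx⟩
        · exact hT
        · exact hf2 x T' hx
      · intro A hA hUA
        by_cases hAT : Disjoint A T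
        · exact ⟨T, Finset.mem_insert_self _ _, hAT⟩
        · obtain ⟨x, hxA, hxT⟩ := Finset.not_disjoint_iff.1 hAT
          obtain ⟨T', hT', hd'⟩ := hf3 x hxT A hA (Finset.insert_subset hxA hUA)
          exact ⟨T', Finset.mem_insert_of_mem (Finset.mem_biUnion.2 ⟨x, hxT, hT'⟩), hd'⟩
    · push Not at hUF
      exact ⟨∅, by simp, by simp, fun A hA hUA => absurd hUA (hUF A hA)⟩

/-- The members of `F` disjoint from `T` but from no other member of `𝒯`. -/
def privatePart (F 𝒯 : Finset (Finset α)) (T : Finset α) : Finset (Finset α) :=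
  F.filter fun A => Disjoint A T ∧ ∀ U ∈ 𝒯, U ≠ T → ¬ Disjoint A U

/-- The members of `F` disjoint from no member of `𝒯`. -/
def uncovered (F 𝒯 : Finset (Finset α)) : Finset (Finset α) :=
  F.filter fun A => ∀ T ∈ 𝒯, ¬ Disjoint A T

/-- A cover can be pruned so that all private parts are large, at the price of leaving a bounded
number of sets uncovered. -/
theorem exists_subcover_privatePart {𝒯 : Finset (Finset α)}
    (h𝒯 : ∀ A ∈ F, ∃ T ∈ 𝒯, Disjoint A T) (C : ℕ) :
    ∃ 𝒯' ⊆ 𝒯, (uncovered F 𝒯').card ≤ C * 𝒯.card ∧ ∀ T ∈ 𝒯', C ≤ (privatePart F 𝒯' T).card := by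
  obtain ⟨𝒯', h𝒯', hmin⟩ := Finset.exists_min_image 𝒯.powerset
    (fun 𝒮 => (uncovered F 𝒮).card + C * 𝒮.card) ⟨𝒯, by simp⟩
  rw [Finset.mem_powerset] at h𝒯'
  refine ⟨𝒯', h𝒯', ?_, ?_⟩
  · have h1 := hmin 𝒯 (by simp)
    have h2 : uncovered F 𝒯 = ∅ := by
      refine Finset.filter_eq_empty_iff.2 fun A hA hcon => ?_
      obtain ⟨T, hT, hd⟩ := h𝒯 A hA
      exact hcon T hT hd
    rw [h2, Finset.card_empty, zero_add] at h1
    omega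
  · intro T hT
    have h1 := hmin (𝒯'.erase T)
      (Finset.mem_powerset.2 ((Finset.erase_subset _ _).trans h𝒯'))
    have h2 : uncovered F (𝒯'.erase T) ⊆ uncovered F 𝒯' ∪ privatePart F 𝒯' T := by
      intro A hA
      rw [uncovered, Finset.mem_filter] at hA
      rw [Finset.mem_union, uncovered, privatePart, Finset.mem_filter, Finset.mem_filter]
      have h3 : ∀ T' ∈ 𝒯', T' ≠ T → ¬ Disjoint A T' := fun T' hT' hne =>
        hA.2 T' (Finset.mem_erase.2 ⟨hne, hT'⟩)
      by_cases hAT : Disjoint A T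
      · exact Or.inr ⟨hA.1, hAT, h3⟩
      · refine Or.inl ⟨hA.1, fun T' hT' => ?_⟩
        by_cases hne : T' = T
        · rwa [hne]
        · exact h3 T' hT' hne
    have h3 := (Finset.card_le_card h2).trans (Finset.card_union_le _ _)
    have h4 := Finset.card_erase_add_one hT
    rw [← h4, mul_add] at h1
    omega

theorem card_le_sum_add_uncovered (F 𝒯 : Finset (Finset α)) :
    F.card ≤ ∑ T ∈ 𝒯, (F.filter fun A => Disjoint A T).card + (uncovered F 𝒯).card := by
  have hsub : F ⊆ (𝒯.biUnion fun T => F.filter fun A => Disjoint A T) ∪ uncovered F 𝒯 := by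
    intro A hA
    rw [Finset.mem_union, Finset.mem_biUnion, uncovered, Finset.mem_filter]
    by_cases h : ∃ T ∈ 𝒯, Disjoint A T
    · obtain ⟨T, hT, hd⟩ := h
      exact Or.inl ⟨T, hT, Finset.mem_filter.2 ⟨hA, hd⟩⟩
    · push Not at h
      exact Or.inr ⟨hA, h⟩
  exact (Finset.card_le_card hsub).trans ((Finset.card_union_le _ _).trans
    (Nat.add_le_add_right Finset.card_biUnion_le _))

theorem card_le_privatePart_add (F : Finset (Finset α)) (𝒯 : Finset (Finset α)) (T : Finset α) :
    F.card ≤ (privatePart F 𝒯 T).card +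
      ∑ T' ∈ 𝒯.erase T, (F.filter fun A => Disjoint A T').card + (uncovered F 𝒯).card := by
  have h1 := card_le_sum_add_uncovered (F \ privatePart F 𝒯 T) (𝒯.erase T)
  have h2 : uncovered (F \ privatePart F 𝒯 T) (𝒯.erase T) ⊆ uncovered F 𝒯 := by
    intro A hA
    rw [uncovered, Finset.mem_filter, Finset.mem_sdiff, privatePart, Finset.mem_filter] at hA
    refine Finset.mem_filter.2 ⟨hA.1.1, ?_⟩
    have h3 : ∀ T' ∈ 𝒯, T' ≠ T → ¬ Disjoint A T' := fun T' hT' hne =>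
        hA.2 T' (Finset.mem_erase.2 ⟨hne, hT'⟩)
    intro T' hT' hd
    by_cases hne : T' = T
    · exact hA.1.2 ⟨hA.1.1, hne ▸ hd, h3⟩
    · exact h3 T' hT' hne hd
  have h4 : ∑ T' ∈ 𝒯.erase T, ((F \ privatePart F 𝒯 T).filter fun A => Disjoint A T').card ≤
      ∑ T' ∈ 𝒯.erase T, (F.filter fun A => Disjoint A T').card :=
    Finset.sum_le_sum fun T' _ =>
      Finset.card_le_card (Finset.filter_subset_filter _ Finset.sdiff_subset)
  have h5 := Finset.card_le_card h2
  have hsub : privatePart F 𝒯 T ⊆ F := Finset.filter_subset _ _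
  have h6 := Finset.card_sdiff_add_card_eq_card hsub
  omega

theorem inter_eq_of_mem_privatePart {n : ℕ} {X T A : Finset α}
    (hT : T ∈ X.powersetCard n) (hX : X.card = 2 * n)
    (hA : A ∈ privatePart F (X.powersetCard n) T) : A ∩ X = X \ T := by
  rw [privatePart, Finset.mem_filter] at hA
  obtain ⟨-, hd, hmeet⟩ := hA
  have hTX := Finset.mem_powersetCard.1 hT
  have hsub : A ∩ X ⊆ X \ T := fun x hx => Finset.mem_sdiff.2
    ⟨(Finset.mem_inter.1 hx).2, Finset.disjoint_left.1 hd (Finset.mem_inter.1 hx).1⟩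
  refine hsub.antisymm fun x hx => ?_
  by_contra hxA
  rw [Finset.mem_sdiff] at hx
  have hxA' : x ∉ A := fun h => hxA (Finset.mem_inter.2 ⟨h, hx.1⟩)
  rcases T.eq_empty_or_nonempty with rfl | ⟨y, hy⟩
  · have h0 : n = 0 := by simpa using hTX.2.symm
    rw [h0, mul_zero, Finset.card_eq_zero] at hX
    simp [hX] at hx
  · have hxy : x ∉ T.erase y := fun h => hx.2 (Finset.mem_of_mem_erase h)
    refine hmeet (insert x (T.erase y)) ?_ ?_ ?_
    · rw [Finset.mem_powersetCard, Finset.card_insert_of_notMem hxy, Finset.card_erase_add_one hy]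
      exact ⟨Finset.insert_subset hx.1 ((Finset.erase_subset _ _).trans hTX.1), hTX.2⟩
    · intro h
      exact hx.2 (h ▸ Finset.mem_insert_self _ _)
    · rw [Finset.disjoint_insert_right]
      exact ⟨hxA', hd.mono_right (Finset.erase_subset _ _)⟩

end Covers

section Structure

variable {α : Type u} [DecidableEq α] {F : Finset (Finset α)}

/-- The vertices outside `X` that extend `P` to a member of `F`. -/
def extensions (F : Finset (Finset α)) (X P : Finset α) : Finset α :=
  (F.biUnion id \ X).filter fun x => insert x P ∈ F

theorem mem_extensions {X P : Finset α} {x : α} :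
    x ∈ extensions F X P ↔ x ∉ X ∧ insert x P ∈ F := by
  rw [extensions, Finset.mem_filter, Finset.mem_sdiff, Finset.mem_biUnion]
  exact ⟨fun h => ⟨h.1.2, h.2⟩, fun h => ⟨⟨⟨_, h.2, Finset.mem_insert_self _ _⟩, h.1⟩, h.2⟩⟩

theorem exists_mem_extensions {n : ℕ} (hF : ∀ A ∈ F, A.card = n + 1) {X A : Finset α}
    (hA : A ∈ F) (hn : (A ∩ X).card = n) : ∃ x ∈ extensions F X (A ∩ X), insert x (A ∩ X) = A := by
  have h1 : (A \ X).card = 1 := by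
    have := Finset.card_sdiff_add_card_inter A X
    rw [hF A hA] at this
    omega
  obtain ⟨x, hx⟩ := Finset.card_eq_one.1 h1
  have h2 : insert x (A ∩ X) = A := by
    rw [Finset.insert_eq, ← hx, Finset.sdiff_union_inter]
  have h3 : x ∈ A \ X := hx ▸ Finset.mem_singleton_self x
  exact ⟨x, mem_extensions.2 ⟨(Finset.mem_sdiff.1 h3).2, by rwa [h2]⟩, h2⟩

theorem injOn_insert_extensions {X P : Finset α} (hP : P ⊆ X) :
    Set.InjOn (fun x => insert x P) (extensions F X P) := by
  intro x hx y _ hxy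
  have hxP : x ∉ P := fun h => (mem_extensions.1 hx).1 (hP h)
  have h : x ∈ insert y P := by
    rw [← show insert x P = insert y P from hxy]
    exact Finset.mem_insert_self _ _
  rw [Finset.mem_insert] at h
  tauto

theorem card_extensions_sdiff_le {X P A : Finset α} {s : ℕ} (hP : P ⊆ X) (hd : Disjoint A P)
    (hs : (F.filter fun B => Disjoint A B).card ≤ s) : (extensions F X P \ A).card ≤ s := by
  rw [← Finset.card_image_of_injOn ((injOn_insert_extensions (F := F) hP).mono
    (Finset.coe_subset.2 Finset.sdiff_subset))]
  refine (Finset.card_le_card fun B hB => ?_).trans hs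
  obtain ⟨x, hx, rfl⟩ := Finset.mem_image.1 hB
  rw [Finset.mem_sdiff, mem_extensions] at hx
  refine Finset.mem_filter.2 ⟨hx.1.2, ?_⟩
  exact Finset.disjoint_insert_right.2 ⟨hx.2, hd⟩

theorem le_card_inter {n s : ℕ} (hF : ∀ A ∈ F, A.card = n + 1)
    (hs : ∀ A ∈ F, (F.filter fun B => Disjoint A B).card ≤ s) {X : Finset α} (hX : X.card = 2 * n)
    (hlarge : ∀ P ∈ X.powersetCard n, s + 2 * (n + 1) < 2 * (extensions F X P).card)
    {A : Finset α} (hA : A ∈ F) (hn : 0 < n) : n ≤ (A ∩ X).card := by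
  by_contra hlt
  have h1 : n + 1 ≤ (X \ A).card := by
    have := Finset.card_sdiff_add_card_inter X A
    rw [Finset.inter_comm] at this
    omega
  have h2 : 1 < ((X \ A).powersetCard n).card := by
    rw [Finset.card_powersetCard]
    calc 1 < (n + 1).choose n := by rw [Nat.choose_succ_self_right]; omega
      _ ≤ _ := Nat.choose_mono _ h1
  obtain ⟨P, hP, Q, hQ, hPQ⟩ := Finset.one_lt_card.1 h2
  have hsub : ∀ {P}, P ∈ (X \ A).powersetCard n → P ⊆ X ∧ Disjoint P A ∧ P.card = n := by
    intro P hP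
    rw [Finset.mem_powersetCard, Finset.subset_sdiff] at hP
    exact ⟨hP.1.1, hP.1.2, hP.2⟩
  have hfam : ∀ {P}, P ∈ (X \ A).powersetCard n →
      ((extensions F X P \ A).image fun x => insert x P).card = (extensions F X P \ A).card :=
    fun hP => Finset.card_image_of_injOn ((injOn_insert_extensions (F := F) (hsub hP).1).mono
      (Finset.coe_subset.2 Finset.sdiff_subset))
  have hbig : ∀ {P}, P ∈ (X \ A).powersetCard n →
      s < 2 * (extensions F X P \ A).card := by
    intro P hP
    have h3 := hlarge P (Finset.mem_powersetCard.2 ⟨(hsub hP).1, (hsub hP).2.2⟩)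
    have h4 := Finset.le_card_sdiff A (extensions F X P)
    rw [hF A hA] at h4
    omega
  have hmem : ∀ {P}, P ∈ (X \ A).powersetCard n →
      ((extensions F X P \ A).image fun x => insert x P) ⊆ F.filter fun B => Disjoint A B := by
    intro P hP B hB
    obtain ⟨x, hx, rfl⟩ := Finset.mem_image.1 hB
    rw [Finset.mem_sdiff, mem_extensions] at hx
    exact Finset.mem_filter.2 ⟨hx.1.2, Finset.disjoint_insert_right.2 ⟨hx.2, (hsub hP).2.1.symm⟩⟩
  have htrace : ∀ {P B}, P ∈ (X \ A).powersetCard n →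
      B ∈ ((extensions F X P \ A).image fun x => insert x P) → B ∩ X = P := by
    intro P B hP hB
    obtain ⟨x, hx, rfl⟩ := Finset.mem_image.1 hB
    rw [Finset.mem_sdiff, mem_extensions] at hx
    rw [Finset.insert_inter_of_notMem hx.1.1, Finset.inter_eq_left.2 (hsub hP).1]
  have hdis : Disjoint ((extensions F X P \ A).image fun x => insert x P)
      ((extensions F X Q \ A).image fun x => insert x Q) := by
    rw [Finset.disjoint_left]
    intro B hBP hBQ
    exact hPQ ((htrace hP hBP).symm.trans (htrace hQ hBQ))
  have h5 := (Finset.card_le_card (Finset.union_subset (hmem hP) (hmem hQ))).trans (hs A hA)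
  rw [Finset.card_union_of_disjoint hdis, hfam hP, hfam hQ] at h5
  have h6 := hbig hP
  have h7 := hbig hQ
  omega

theorem card_inter_eq {n s : ℕ} (hF : ∀ A ∈ F, A.card = n + 1)
    (hs : ∀ A ∈ F, (F.filter fun B => Disjoint A B).card ≤ s)
    (hdis : ∀ A ∈ F, ∃ B ∈ F, Disjoint A B) {X : Finset α} (hX : X.card = 2 * n)
    (hlarge : ∀ P ∈ X.powersetCard n, s + 2 * (n + 1) < 2 * (extensions F X P).card)
    {A : Finset α} (hA : A ∈ F) (hn : 0 < n) : (A ∩ X).card = n := by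
  have h1 := le_card_inter hF hs hX hlarge hA hn
  obtain ⟨B, hB, hAB⟩ := hdis A hA
  have h2 := le_card_inter hF hs hX hlarge hB hn
  have h3 : ((A ∩ X) ∪ (B ∩ X)).card ≤ X.card :=
    Finset.card_le_card (Finset.union_subset Finset.inter_subset_right Finset.inter_subset_right)
  rw [Finset.card_union_of_disjoint
    (hAB.mono Finset.inter_subset_left Finset.inter_subset_left)] at h3
  omega

/-- If every `n`-subset of the `2 * n`-set `X` has many extensions, then all members of `F` consist
of an `n`-subset of `X` and a further vertex. -/
theorem card_le_and_eq_of_card_extensions {n s : ℕ} (hF : ∀ A ∈ F, A.card = n + 1)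
    (hs : ∀ A ∈ F, (F.filter fun B => Disjoint A B).card ≤ s)
    (hdis : ∀ A ∈ F, ∃ B ∈ F, Disjoint A B) (hn : 0 < n) {X : Finset α} (hX : X.card = 2 * n)
    (hlarge : ∀ P ∈ X.powersetCard n, s + 2 * (n + 1) < 2 * (extensions F X P).card) :
    F.card ≤ (s + 1) * (2 * n).choose n ∧
      (F.card = (s + 1) * (2 * n).choose n →
        ∃ (A B : Finset α) (f : Finset α → Finset α),
          Disjoint A B ∧ A.card = 2 * n ∧ s + 1 ≤ B.card ∧
          (∀ S ∈ A.powersetCard n, f S ⊆ B ∧ (f S).card = s + 1 ∧ f S = f (A \ S)) ∧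
          F = (A.powersetCard n).biUnion fun S => (f S).image fun x => insert x S) := by
  have hFeq : F = (X.powersetCard n).biUnion
      fun S => (extensions F X S).image fun x => insert x S := by
    ext A
    rw [Finset.mem_biUnion]
    constructor
    · intro hA
      have hc := card_inter_eq hF hs hdis hX hlarge hA hn
      exact ⟨A ∩ X, Finset.mem_powersetCard.2 ⟨Finset.inter_subset_right, hc⟩,
        Finset.mem_image.2 (exists_mem_extensions hF hA hc)⟩
    · rintro ⟨S, -, hAS⟩
      obtain ⟨x, hx, rfl⟩ := Finset.mem_image.1 hAS
      exact (mem_extensions.1 hx).2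
  have hcompl : ∀ S ∈ X.powersetCard n, X \ S ∈ X.powersetCard n := by
    intro S hS
    rw [Finset.mem_powersetCard] at hS ⊢
    refine ⟨Finset.sdiff_subset, ?_⟩
    rw [Finset.card_sdiff_of_subset hS.1, hX, hS.2]
    omega
  have hcc : ∀ S ∈ X.powersetCard n, X \ (X \ S) = S := fun S hS =>
    Finset.sdiff_sdiff_eq_self (Finset.mem_powersetCard.1 hS).1
  have herase : ∀ S ∈ X.powersetCard n, ∀ x ∈ extensions F X S,
      ((extensions F X (X \ S)).erase x).card ≤ s := by
    intro S hS x hx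
    have hx' := mem_extensions.1 hx
    refine (Finset.card_le_card ?_).trans (card_extensions_sdiff_le (F := F) (X := X) (P := X \ S)
      Finset.sdiff_subset ?_ (hs _ hx'.2))
    · intro y hy
      rw [Finset.mem_erase] at hy
      rw [Finset.mem_sdiff, Finset.mem_insert]
      refine ⟨hy.2, ?_⟩
      rintro (h | h)
      · exact hy.1 h
      · exact (mem_extensions.1 hy.2).1 ((Finset.mem_powersetCard.1 hS).1 h)
    · rw [Finset.disjoint_insert_left]
      exact ⟨fun h => hx'.1 (Finset.mem_sdiff.1 h).1, Finset.disjoint_sdiff⟩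
  have hle : ∀ S ∈ X.powersetCard n, (extensions F X S).card ≤ s + 1 := by
    intro S hS
    have hlS := hlarge _ (hcompl S hS)
    obtain ⟨x, hx⟩ := Finset.card_pos.1 (by omega : 0 < (extensions F X (X \ S)).card)
    have h1 := herase _ (hcompl S hS) x hx
    rw [hcc S hS] at h1
    have h2 := Finset.pred_card_le_card_erase (s := extensions F X S) (a := x)
    omega
  have hconst : ∑ _S ∈ X.powersetCard n, (s + 1) = (s + 1) * (2 * n).choose n := by
    rw [Finset.sum_const, Finset.card_powersetCard, hX, smul_eq_mul, mul_comm]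
  have hcard : F.card ≤ ∑ S ∈ X.powersetCard n, (extensions F X S).card := by
    conv_lhs => rw [hFeq]
    exact Finset.card_biUnion_le.trans (Finset.sum_le_sum fun _ _ => Finset.card_image_le)
  refine ⟨hcard.trans ((Finset.sum_le_sum hle).trans_eq hconst), fun heq => ?_⟩
  have hall := (Finset.sum_eq_sum_iff_of_le hle).1
    (le_antisymm (Finset.sum_le_sum hle) (by rw [hconst, ← heq]; exact hcard))
  have hsub : ∀ S ∈ X.powersetCard n, extensions F X S ⊆ extensions F X (X \ S) := by
    intro S hS x hx
    by_contra hxn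
    have h1 := herase S hS x hx
    rw [Finset.erase_eq_of_notMem hxn, hall _ (hcompl S hS)] at h1
    omega
  refine ⟨X, F.biUnion id \ X, extensions F X, Finset.disjoint_sdiff, hX, ?_, ?_, hFeq⟩
  · obtain ⟨S, hS⟩ := Finset.powersetCard_nonempty.2 (by omega : n ≤ X.card)
    rw [← hall S hS]
    exact Finset.card_le_card (Finset.filter_subset _ _)
  · intro S hS
    refine ⟨Finset.filter_subset _ _, hall S hS, (hsub S hS).antisymm ?_⟩
    have := hsub _ (hcompl S hS)
    rwa [hcc S hS] at this

end Structure

section Kernels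

variable {α : Type u} [DecidableEq α] {F : Finset (Finset α)}

/-- Sunflowers inside the large private parts of a cover provide kernels that form
cross-intersecting pairs with the members of the cover. -/
theorem exists_crossPairs {n t M : ℕ} (hF : ∀ A ∈ F, A.card = n + 1) (ht : n + 1 < t)
    (hM : ∀ G : Finset (Finset α), (∀ A ∈ G, A.card = n + 1) → M < G.card →
      ∃ H ⊆ G, H.card = t ∧ ∃ K, IsSunflower H K)
    {𝒯 : Finset (Finset α)} (h𝒯 : ∀ T ∈ 𝒯, T.card ≤ n)
    (hpriv : ∀ T ∈ 𝒯, M < (privatePart F 𝒯 T).card) :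
    ∃ S : Finset α → Finset α, (∀ T ∈ 𝒯, (S T).card ≤ n) ∧ CrossPairs 𝒯 S id := by
  have hex : ∀ T ∈ 𝒯, ∃ K : Finset α, K.card ≤ n ∧ Disjoint K T ∧
      ∀ T' ∈ 𝒯, T' ≠ T → ¬ Disjoint K T' := by
    intro T hT
    have hsub : privatePart F 𝒯 T ⊆ F := Finset.filter_subset _ _
    obtain ⟨H, hH, hHt, K, hK⟩ := hM _ (fun A hA => hF A (hsub hA)) (hpriv T hT)
    have hHp : ∀ A ∈ H, Disjoint A T ∧ ∀ T' ∈ 𝒯, T' ≠ T → ¬ Disjoint A T' :=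
      fun A hA => (Finset.mem_filter.1 (hH hA)).2
    obtain ⟨A, hA⟩ := Finset.card_pos.1 (by omega : 0 < H.card)
    refine ⟨K, ?_, (hHp A hA).1.mono_left (hK.kernel_subset A hA), ?_⟩
    · have := hK.card_kernel_lt (fun A hA => hF A (hsub (hH hA))) (by omega)
      omega
    · intro T' hT' hne
      have hT'n := h𝒯 T' hT'
      exact hK.not_disjoint_kernel (by omega) fun A hA => (hHp A hA).2 T' hT' hne
  choose! S hS using hex
  exact ⟨S, fun T hT => (hS T hT).1, fun T hT => (hS T hT).2.1,
    fun T hT T' hT' hne => (hS T hT).2.2 T' hT' hne.symm⟩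

/-- Boundedly many kernels, each disjoint from few members of `F`, cover almost all of `F`. -/
theorem exists_kernel_cover {n t M s : ℕ} (hF : ∀ A ∈ F, A.card = n + 1) (ht : n + 1 < t)
    (hM : ∀ G : Finset (Finset α), (∀ A ∈ G, A.card = n + 1) → M < G.card →
      ∃ H ⊆ G, H.card = t ∧ ∃ K, IsSunflower H K)
    (hlow : ∀ A ∈ F, M < (F.filter fun B => Disjoint A B).card)
    (hs : ∀ A ∈ F, (F.filter fun B => Disjoint A B).card ≤ s) :
    ∃ 𝒯 : Finset (Finset α), (∀ T ∈ 𝒯, T.card ≤ n) ∧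
      (∀ T ∈ 𝒯, (F.filter fun A => Disjoint A T).card * (t - (n + 1)) ≤ t * s) ∧
      (uncovered F 𝒯).card ≤ (M + 1) * (n + 2) ^ (n + 1) ∧
      ∀ T ∈ 𝒯, M < (privatePart F 𝒯 T).card := by
  obtain ⟨𝒯, hcard, hgood, hcov⟩ := exists_disjoint_cover hF
    (good := fun T => T.card ≤ n ∧
      (F.filter fun A => Disjoint A T).card * (t - (n + 1)) ≤ t * s) (by
      intro A hA
      obtain ⟨H, hH, hHt, K, hK⟩ := hM _
        (fun B hB => hF B (Finset.mem_filter.1 hB).1) (hlow A hA)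
      have hHF : H ⊆ F := hH.trans (Finset.filter_subset _ _)
      obtain ⟨B, hB⟩ := Finset.card_pos.1 (by omega : 0 < H.card)
      have hlt := hK.card_kernel_lt (fun A hA => hF A (hHF hA)) (by omega)
      refine ⟨K, ⟨by omega, ?_⟩, by omega, ?_⟩
      · have := hK.card_disjoint_kernel_mul_le hF hHF hs
        rwa [hHt] at this
      · exact (Finset.mem_filter.1 (hH hB)).2.mono_right (hK.kernel_subset B hB))
    (n + 1) ∅ (by simp)
  obtain ⟨𝒯', hsub, hunc, hpriv⟩ := exists_subcover_privatePart
    (fun A hA => hcov A hA (Finset.empty_subset _)) (M + 1)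
  exact ⟨𝒯', fun T hT => (hgood T (hsub hT)).1, fun T hT => (hgood T (hsub hT)).2,
    hunc.trans (Nat.mul_le_mul_left _ hcard), hpriv⟩

/-- A large almost intersecting family has a vertex set `X` of size `2 * n` all of whose
`n`-subsets have many extensions. -/
theorem exists_card_extensions_large {n N M E s : ℕ} (hn : 0 < n) (hN : N = (2 * n).choose n)
    (hE : E = (M + 1) * (n + 2) ^ (n + 1)) (hsE : 4 * N * E + 4 * (n + 1) < s)
    (hF : ∀ A ∈ F, A.card = n + 1)
    (hM : ∀ G : Finset (Finset α), (∀ A ∈ G, A.card = n + 1) → M < G.card →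
      ∃ H ⊆ G, H.card = (n + 1) * (4 * N + 1) ∧ ∃ K, IsSunflower H K)
    (hlow : ∀ A ∈ F, M < (F.filter fun B => Disjoint A B).card)
    (hs : ∀ A ∈ F, (F.filter fun B => Disjoint A B).card ≤ s) (hlarge : (s + 1) * N ≤ F.card) :
    ∃ X : Finset α, X.card = 2 * n ∧
      ∀ P ∈ X.powersetCard n, s + 2 * (n + 1) < 2 * (extensions F X P).card := by
  have hNpos : 0 < N := hN ▸ Nat.choose_pos (by omega)
  have ht : n + 1 < (n + 1) * (4 * N + 1) := by nlinarith
  obtain ⟨𝒯, hTn, hTs, hunc, hpriv⟩ := exists_kernel_cover hF ht hM hlow hs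
  rw [← hE] at hunc
  have hTs' : ∀ T ∈ 𝒯, (F.filter fun A => Disjoint A T).card * (4 * N) ≤ (4 * N + 1) * s := by
    intro T hT
    have h := hTs T hT
    have h1 : (n + 1) * (4 * N + 1) - (n + 1) = (n + 1) * (4 * N) := by
      rw [mul_add, mul_one, Nat.add_sub_cancel]
    rw [h1] at h
    refine Nat.le_of_mul_le_mul_left ?_ (by omega : 0 < n + 1)
    calc (n + 1) * ((F.filter fun A => Disjoint A T).card * (4 * N)) = _ := by ring
      _ ≤ _ := h
      _ = (n + 1) * ((4 * N + 1) * s) := by ring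
  have hsum : ∀ 𝒮 ⊆ 𝒯, (∑ T ∈ 𝒮, (F.filter fun A => Disjoint A T).card) * (4 * N) ≤
      𝒮.card * ((4 * N + 1) * s) := by
    intro 𝒮 h𝒮
    rw [Finset.sum_mul, ← smul_eq_mul 𝒮.card]
    exact Finset.sum_le_card_nsmul _ _ _ fun T hT => hTs' T (h𝒮 hT)
  obtain ⟨S, hSn, hcross⟩ := exists_crossPairs hF ht hM hTn hpriv
  have hle : 𝒯.card ≤ N := hN ▸ hcross.card_le hSn hTn
  obtain ⟨L, rfl⟩ : ∃ L, N = L + 1 := ⟨N - 1, by omega⟩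
  have hcard : 𝒯.card = L + 1 := by
    by_contra hne
    have h1 := card_le_sum_add_uncovered F 𝒯
    have h2 := hsum 𝒯 subset_rfl
    have h3 : 𝒯.card * ((4 * (L + 1) + 1) * s) ≤ L * ((4 * (L + 1) + 1) * s) :=
      Nat.mul_le_mul_right _ (by omega)
    have h4 := Nat.mul_le_mul_right (4 * (L + 1)) (hlarge.trans h1)
    have h5 := Nat.mul_le_mul_right (4 * (L + 1)) hunc
    nlinarith
  obtain ⟨X, hX, himg⟩ := hcross.exists_image_eq_powersetCard hn hSn hTn (hcard.trans hN)
  rw [Finset.image_id] at himg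
  refine ⟨X, hX, fun P hP => ?_⟩
  have hPX := Finset.mem_powersetCard.1 hP
  have hQ : X \ P ∈ 𝒯 := by
    rw [himg, Finset.mem_powersetCard, Finset.card_sdiff_of_subset hPX.1, hX, hPX.2]
    exact ⟨Finset.sdiff_subset, by omega⟩
  have hsub : privatePart F 𝒯 (X \ P) ⊆ (extensions F X P).image fun x => insert x P := by
    intro A hA
    have hAF : A ∈ F := (Finset.mem_filter.1 hA).1
    have hAX : A ∩ X = P := by
      rw [himg] at hA hQ
      rw [inter_eq_of_mem_privatePart hQ hX hA, Finset.sdiff_sdiff_eq_self hPX.1]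
    rw [Finset.mem_image, ← hAX]
    exact exists_mem_extensions hF hAF (by rw [hAX, hPX.2])
  have h0 := (Finset.card_le_card hsub).trans Finset.card_image_le
  have h1 := card_le_privatePart_add F 𝒯 (X \ P)
  have h2 := hsum (𝒯.erase (X \ P)) (Finset.erase_subset _ _)
  rw [Finset.card_erase_of_mem hQ, hcard, Nat.add_sub_cancel] at h2
  have h4 := Nat.mul_le_mul_right (4 * (L + 1)) (hlarge.trans h1)
  have h5 := Nat.mul_le_mul_right (4 * (L + 1)) hunc
  have h6 : 3 * s ≤ 4 * (privatePart F 𝒯 (X \ P)).card := by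
    refine Nat.le_of_mul_le_mul_left ?_ (by omega : 0 < L + 1)
    nlinarith
  omega

end Kernels

/-- For every `k > 2` there exist constants `R = R(k)` and `s0 = s0(k)`
such that for every `s > s0`: any `k`-uniform `[R,s]`-almost intersecting hypergraph has
at most `(s+1) * (2k-2 choose k-1)` edges, and the hypergraphs attaining this bound are
exactly those of the form `M_f`. -/
theorem stmt_5 (k : ℕ) (hk : 2 < k) :
    ∃ R s0 : ℕ, ∀ s : ℕ, s0 < s →
      ∀ (α : Type u) [DecidableEq α] (F : Finset (Finset α)),
        (∀ A ∈ F, A.card = k) →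
        (∀ A ∈ F, R ≤ (F.filter fun B => Disjoint A B).card ∧
          (F.filter fun B => Disjoint A B).card ≤ s) →
        F.card ≤ (s + 1) * Nat.choose (2 * k - 2) (k - 1) ∧
        (F.card = (s + 1) * Nat.choose (2 * k - 2) (k - 1) →
          ∃ (A B : Finset α) (f : Finset α → Finset α),
            Disjoint A B ∧ A.card = 2 * k - 2 ∧ s + 1 ≤ B.card ∧
            (∀ S ∈ A.powersetCard (k - 1),
              f S ⊆ B ∧ (f S).card = s + 1 ∧ f S = f (A \ S)) ∧
            F = (A.powersetCard (k - 1)).biUnion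
              fun S => (f S).image fun x => insert x S) := by
  obtain ⟨n, rfl⟩ : ∃ n, k = n + 1 := ⟨k - 1, by omega⟩
  have h2n : 2 * (n + 1) - 2 = 2 * n := by omega
  rw [h2n, Nat.add_sub_cancel]
  set N := (2 * n).choose n with hN
  obtain ⟨M, hM⟩ := exists_sunflower.{u} ((n + 1) * (4 * N + 1)) (n + 1)
  refine ⟨M + 1, 4 * N * ((M + 1) * (n + 2) ^ (n + 1)) + 4 * (n + 1), ?_⟩
  intro s hs α _ F hF hdeg
  have hup : ∀ A ∈ F, (F.filter fun B => Disjoint A B).card ≤ s := fun A hA => (hdeg A hA).2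
  by_cases hlarge : (s + 1) * N ≤ F.card
  · obtain ⟨X, hX, hext⟩ := exists_card_extensions_large (by omega) hN rfl hs hF hM
      (fun A hA => (hdeg A hA).1) hup hlarge
    refine card_le_and_eq_of_card_extensions hF hup ?_ (by omega) hX hext
    intro A hA
    have hA0 := (hdeg A hA).1
    obtain ⟨B, hB⟩ := Finset.card_pos.1 (by omega : 0 < (F.filter fun B => Disjoint A B).card)
    exact ⟨B, Finset.mem_filter.1 hB⟩
  · exact ⟨by omega, fun h => absurd h.ge hlarge⟩
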